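/- arXiv:2210.01284 — 6 statements merged into one kernel-verified Lean document; each statement's English description precedes it below -/
import Mathlib

section
/- Let λ > 0 and let Q : (0,1) → ℝ be the quantile function of the skew normal distribution SN(λ). Then, as u → 0⁺, Q(u) = -(1/√(1+λ²))·√(-2·log u)·(1 + (1/2)·log(-log u)/log u + (log(2πλ)/2)/log u + r(u)), where the remainder satisfies r(u) = O((log(-log u)/log u)²) as u → 0⁺ (i.e. along the filter of punctured right-neighbourhoods of 0). -/
/-!
With `k = 1 + l²`, Mills' inequalities for `Φ(l t)` inside the integral defining the cdf `F`,
followed by a second comparison of derivatives, give, as `x → -∞` and with `y = k x² / 2`,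
`F(x) = e^{-y} / (2 π l y) * (1 + O(1 / y))` (`snCDF_le`, `le_snCDF`). All these bounds come from
one principle: a function vanishing at `-∞` is compared with an integral through its derivative
(`le_integral_Iic_of_deriv_le`).

Taking logarithms at `x = Q u`, with `L = -log u`, yields
`L = y + log (2 π l) + log y + O(1 / y)` (`neg_log_snCDF_bounds`). Since `Q u = -√(2 y / k)`, the
quantity to expand is `√(y / L) = √(1 - s)` with `s = (L - y) / L = O(log L / L)`. The expansion
`√(1 - s) = 1 - s / 2 + O(s²)`, together with `log y = log L + O(s)`, gives the claim
(`sqrt_ratio_expansion`). The bounds apply because `Q u → -∞` as `u → 0⁺` (`tendsto_snQuantile`).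
-/

open Real Filter Topology MeasureTheory Asymptotics

/-- The standard normal cumulative distribution function. -/
noncomputable def stdNormalCDF (x : ℝ) : ℝ :=
  ∫ t in Set.Iic x, (Real.sqrt (2 * Real.pi))⁻¹ * Real.exp (-(t ^ 2) / 2)

/-- The cdf of the skew normal distribution `SN(l)`. -/
noncomputable def snCDF (l : ℝ) (x : ℝ) : ℝ :=
  ∫ t in Set.Iic x,
    2 * ((Real.sqrt (2 * Real.pi))⁻¹ * Real.exp (-(t ^ 2) / 2)) * stdNormalCDF (l * t)

/-- Comparison principle: a function vanishing at `-∞` whose derivative is at most `g` on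
`(-∞, x]` lies below the integral of `g`. -/
lemma le_integral_Iic_of_deriv_le {g G G' : ℝ → ℝ} {x : ℝ} (hg : Integrable g)
    (hG : ∀ t ≤ x, HasDerivAt G (G' t) t) (hle : ∀ t ≤ x, G' t ≤ g t)
    (h0 : Tendsto G atBot (𝓝 0)) : G x ≤ ∫ t in Set.Iic x, g t := by
  have h1 := intervalIntegral_tendsto_integral_Iic x hg.integrableOn tendsto_id
  have h2 : Tendsto (fun a => G x - G a) atBot (𝓝 (G x - 0)) := tendsto_const_nhds.sub h0
  rw [sub_zero] at h2
  refine le_of_tendsto_of_tendsto h2 h1 ?_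
  filter_upwards [eventually_le_atBot x] with a ha
  exact intervalIntegral.sub_le_integral_of_hasDeriv_right_of_le ha
    (fun t ht => (hG t ht.2).continuousAt.continuousWithinAt)
    (fun t ht => (hG t ht.2.le).hasDerivWithinAt) hg.integrableOn (fun t ht => hle t ht.2.le)

/-- The reverse comparison: a function vanishing at `-∞` whose derivative is at least `g` on
`(-∞, x]` lies above the integral of `g`. -/
lemma integral_Iic_le_of_le_deriv {g G G' : ℝ → ℝ} {x : ℝ} (hg : Integrable g)
    (hG : ∀ t ≤ x, HasDerivAt G (G' t) t) (hle : ∀ t ≤ x, g t ≤ G' t)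
    (h0 : Tendsto G atBot (𝓝 0)) : ∫ t in Set.Iic x, g t ≤ G x := by
  have h := le_integral_Iic_of_deriv_le (x := x) (G := fun t => -G t) (G' := fun t => -G' t)
    hg.neg (fun t ht => (hG t ht).neg) (fun t ht => neg_le_neg (hle t ht)) (by simpa using h0.neg)
  simp only [Pi.neg_apply, integral_neg] at h
  linarith

lemma integrable_stdNormalDensity :
    Integrable fun t : ℝ => (√(2 * π))⁻¹ * exp (-(t ^ 2) / 2) := by
  have h := (integrable_exp_neg_mul_sq (b := 1 / 2) (by norm_num)).const_mul (√(2 * π))⁻¹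
  refine h.congr (Eventually.of_forall fun t => ?_)
  simp only
  congr 2; ring

lemma stdNormalCDF_nonneg (x : ℝ) : 0 ≤ stdNormalCDF x :=
  integral_nonneg fun t => by positivity

lemma stdNormalCDF_mono : Monotone stdNormalCDF := fun x y h =>
  setIntegral_mono_set integrable_stdNormalDensity.integrableOn
    (Eventually.of_forall fun t => by simp only [Pi.zero_apply]; positivity)
    (Set.Iic_subset_Iic.2 h).eventuallyLE

lemma stdNormalCDF_le (x : ℝ) :
    stdNormalCDF x ≤ ∫ t : ℝ, (√(2 * π))⁻¹ * exp (-(t ^ 2) / 2) :=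
  setIntegral_le_integral integrable_stdNormalDensity
    (Eventually.of_forall fun t => by simp only [Pi.zero_apply]; positivity)

lemma integrable_snDensity (l : ℝ) : Integrable fun t : ℝ =>
    2 * ((√(2 * π))⁻¹ * exp (-(t ^ 2) / 2)) * stdNormalCDF (l * t) := by
  refine (integrable_stdNormalDensity.const_mul 2).mul_bdd
    (c := ∫ t : ℝ, (√(2 * π))⁻¹ * exp (-(t ^ 2) / 2)) ?_ ?_
  · exact (stdNormalCDF_mono.measurable.comp (measurable_const_mul l)).aestronglyMeasurable
  · refine Eventually.of_forall fun t => ?_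
    rw [Real.norm_of_nonneg (stdNormalCDF_nonneg _)]
    exact stdNormalCDF_le _

lemma snCDF_mono (l : ℝ) : Monotone (snCDF l) := fun x y h =>
  setIntegral_mono_set (integrable_snDensity l).integrableOn
    (Eventually.of_forall fun t => by
      have := stdNormalCDF_nonneg (l * t)
      simp only [Pi.zero_apply]; positivity)
    (Set.Iic_subset_Iic.2 h).eventuallyLE

lemma tendsto_exp_neg_mul_sq_atBot {b : ℝ} (hb : 0 < b) :
    Tendsto (fun t : ℝ => exp (-(b * t ^ 2) / 2)) atBot (𝓝 0) := by
  refine tendsto_exp_atBot.comp ?_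
  have h : Tendsto (fun t : ℝ => t ^ 2) atBot atTop := by
    have := (tendsto_pow_atTop (α := ℝ) (n := 2) (by norm_num)).comp tendsto_neg_atBot_atTop
    refine this.congr fun t => ?_
    simp
  have h2 := h.const_mul_atTop_of_neg (r := -(b / 2)) (by linarith)
  refine h2.congr fun t => by ring

lemma hasDerivAt_exp_neg_mul_sq (b t : ℝ) :
    HasDerivAt (fun t : ℝ => exp (-(b * t ^ 2) / 2)) (exp (-(b * t ^ 2) / 2) * (-(b * t))) t := by
  have h : HasDerivAt (fun t : ℝ => -(b * t ^ 2) / 2) (-(b * t)) t := by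
    have := ((hasDerivAt_pow 2 t).const_mul b).neg.div_const 2
    refine this.congr_deriv ?_
    push_cast; ring
  exact h.exp

/-- Mills' upper bound `Φ(z) ≤ φ(z) / |z|` for `z < 0`. -/
lemma stdNormalCDF_le_mills {z : ℝ} (hz : z < 0) :
    stdNormalCDF z ≤ (√(2 * π))⁻¹ * exp (-(z ^ 2) / 2) * -z⁻¹ := by
  have hc : 0 < (√(2 * π))⁻¹ := by positivity
  refine integral_Iic_le_of_le_deriv (G := fun z => (√(2 * π))⁻¹ * exp (-(z ^ 2) / 2) * -z⁻¹)
    (G' := fun z => (√(2 * π))⁻¹ * exp (-(z ^ 2) / 2) * (1 + (z ^ 2)⁻¹))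
    integrable_stdNormalDensity (fun t ht => ?_) (fun t ht => ?_) ?_
  · have h0 : t ≠ 0 := by linarith
    have h := ((hasDerivAt_exp_neg_mul_sq 1 t).const_mul (√(2 * π))⁻¹).mul (hasDerivAt_inv h0).neg
    simp only [one_mul] at h
    refine h.congr_deriv ?_
    simp only [Pi.neg_apply]
    field_simp
  · exact le_mul_of_one_le_right (by positivity) (by linarith [inv_nonneg.2 (sq_nonneg t)])
  · have h := ((tendsto_exp_neg_mul_sq_atBot one_pos).const_mul (√(2 * π))⁻¹).mul
      (tendsto_inv_atBot_zero (𝕜 := ℝ)).neg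
    simpa using h

/-- Mills' lower bound `Φ(z) ≥ φ(z) / |z| * (1 - 1 / z ^ 2)` for `z < 0`. -/
lemma mills_le_stdNormalCDF {z : ℝ} (hz : z < 0) :
    (√(2 * π))⁻¹ * exp (-(z ^ 2) / 2) * (-z⁻¹ + z⁻¹ ^ 3) ≤ stdNormalCDF z := by
  have hc : 0 < (√(2 * π))⁻¹ := by positivity
  refine le_integral_Iic_of_deriv_le
    (G := fun z => (√(2 * π))⁻¹ * exp (-(z ^ 2) / 2) * (-z⁻¹ + z⁻¹ ^ 3))
    (G' := fun z => (√(2 * π))⁻¹ * exp (-(z ^ 2) / 2) * (1 - 3 * z⁻¹ ^ 4))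
    integrable_stdNormalDensity (fun t ht => ?_) (fun t ht => ?_) ?_
  · have h0 : t ≠ 0 := by linarith
    have h := ((hasDerivAt_exp_neg_mul_sq 1 t).const_mul (√(2 * π))⁻¹).mul
      ((hasDerivAt_inv h0).neg.add ((hasDerivAt_inv h0).pow 3))
    simp only [one_mul] at h
    refine h.congr_deriv ?_
    simp only [Pi.neg_apply, Pi.add_apply, Pi.pow_apply]
    push_cast
    field_simp
    ring
  · refine mul_le_of_le_one_right (by positivity) ?_
    have : 0 ≤ t⁻¹ ^ 4 := by positivity
    linarith
  · have h1 := tendsto_inv_atBot_zero (𝕜 := ℝ)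
    have h := ((tendsto_exp_neg_mul_sq_atBot one_pos).const_mul (√(2 * π))⁻¹).mul
      (h1.neg.add (h1.pow 3))
    simpa using h

/-- The product `2 φ(t) φ(l t)` is again a Gaussian, with the factor `1 + l²` in the exponent. -/
lemma snDensity_prod (l t : ℝ) :
    2 * ((√(2 * π))⁻¹ * exp (-(t ^ 2) / 2)) * ((√(2 * π))⁻¹ * exp (-((l * t) ^ 2) / 2))
      = π⁻¹ * exp (-((1 + l ^ 2) * t ^ 2) / 2) := by
  have h1 : exp (-((1 + l ^ 2) * t ^ 2) / 2) = exp (-(t ^ 2) / 2) * exp (-((l * t) ^ 2) / 2) := by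
    rw [← exp_add]; congr 1; ring
  have h2 : (√(2 * π))⁻¹ * (√(2 * π))⁻¹ = (2 * π)⁻¹ := by
    rw [← mul_inv, mul_self_sqrt (by positivity)]
  rw [h1]
  linear_combination (exp := 1) 2 * exp (-(t ^ 2) / 2) * exp (-((l * t) ^ 2) / 2) * h2 +
    (exp (-(t ^ 2) / 2) * exp (-((l * t) ^ 2) / 2)) *
      (by rw [mul_inv]; ring : 2 * (2 * π)⁻¹ = π⁻¹)

/-- Upper tail bound: Mills' bound inside the integral majorises the density by
`e^{-(1 + l²) t² / 2} / (π l |t|)`, which is at most the derivative of the right-hand side. -/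
lemma snCDF_le {l x : ℝ} (hl : 0 < l) (hx : x < 0) :
    snCDF l x ≤ (π * l * (1 + l ^ 2))⁻¹ * exp (-((1 + l ^ 2) * x ^ 2) / 2) * x⁻¹ ^ 2 := by
  have hk : 0 < 1 + l ^ 2 := by positivity
  refine integral_Iic_le_of_le_deriv
    (G := fun x => (π * l * (1 + l ^ 2))⁻¹ * exp (-((1 + l ^ 2) * x ^ 2) / 2) * x⁻¹ ^ 2)
    (G' := fun x => (π * l * (1 + l ^ 2))⁻¹ * exp (-((1 + l ^ 2) * x ^ 2) / 2) *
      (-(1 + l ^ 2) * x⁻¹ - 2 * x⁻¹ ^ 3))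
    (integrable_snDensity l) (fun t ht => ?_) (fun t ht => ?_) ?_
  · have h0 : t ≠ 0 := by linarith
    have h := ((hasDerivAt_exp_neg_mul_sq (1 + l ^ 2) t).const_mul (π * l * (1 + l ^ 2))⁻¹).mul
      ((hasDerivAt_inv h0).pow 2)
    refine h.congr_deriv ?_
    simp only [Pi.pow_apply]
    push_cast
    field_simp
    ring
  · have ht0 : t < 0 := by linarith
    have hlt : l * t < 0 := mul_neg_of_pos_of_neg hl ht0
    have hm := mul_le_mul_of_nonneg_left (stdNormalCDF_le_mills hlt)
      (by positivity : 0 ≤ 2 * ((√(2 * π))⁻¹ * exp (-(t ^ 2) / 2)))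
    rw [← mul_assoc _ _ (-(l * t)⁻¹), snDensity_prod] at hm
    refine hm.trans ?_
    have h3 : 0 ≤ -(t⁻¹ ^ 3) := by
      have : t⁻¹ < 0 := inv_lt_zero.2 ht0
      nlinarith [sq_nonneg t⁻¹, mul_nonneg (sq_nonneg t⁻¹) (neg_nonneg.2 this.le)]
    have h4 : (π * l * (1 + l ^ 2))⁻¹ * exp (-((1 + l ^ 2) * t ^ 2) / 2) *
        (-(1 + l ^ 2) * t⁻¹ - 2 * t⁻¹ ^ 3) =
        π⁻¹ * exp (-((1 + l ^ 2) * t ^ 2) / 2) * -(l * t)⁻¹ +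
        (π * l * (1 + l ^ 2))⁻¹ * exp (-((1 + l ^ 2) * t ^ 2) / 2) * (2 * -(t⁻¹ ^ 3)) := by
      have := ht0.ne
      field_simp
      ring
    rw [h4]
    have : 0 ≤ (π * l * (1 + l ^ 2))⁻¹ * exp (-((1 + l ^ 2) * t ^ 2) / 2) * (2 * -(t⁻¹ ^ 3)) := by
      positivity
    linarith
  · have h := ((tendsto_exp_neg_mul_sq_atBot hk).const_mul (π * l * (1 + l ^ 2))⁻¹).mul
      ((tendsto_inv_atBot_zero (𝕜 := ℝ)).pow 2)
    simpa using h

/-- Lower tail bound, matching `snCDF_le` to relative order `1 / x²`; the coefficient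
`2 / (1 + l²) + 1 / l²` collects the Mills correction `1 / (l t)²` and the correction from
differentiating `1 / t²`. -/
lemma le_snCDF {l x : ℝ} (hl : 0 < l) (hx : x < 0) :
    (π * l * (1 + l ^ 2))⁻¹ * exp (-((1 + l ^ 2) * x ^ 2) / 2) *
      (x⁻¹ ^ 2 - (2 / (1 + l ^ 2) + 1 / l ^ 2) * x⁻¹ ^ 4) ≤ snCDF l x := by
  have hk : 0 < 1 + l ^ 2 := by positivity
  refine le_integral_Iic_of_deriv_le
    (G := fun x => (π * l * (1 + l ^ 2))⁻¹ * exp (-((1 + l ^ 2) * x ^ 2) / 2) *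
      (x⁻¹ ^ 2 - (2 / (1 + l ^ 2) + 1 / l ^ 2) * x⁻¹ ^ 4))
    (G' := fun x => (π * l * (1 + l ^ 2))⁻¹ * exp (-((1 + l ^ 2) * x ^ 2) / 2) *
      (-(1 + l ^ 2) * x⁻¹ + (1 + l ^ 2) / l ^ 2 * x⁻¹ ^ 3
        + 4 * (2 / (1 + l ^ 2) + 1 / l ^ 2) * x⁻¹ ^ 5))
    (integrable_snDensity l) (fun t ht => ?_) (fun t ht => ?_) ?_
  · have h0 : t ≠ 0 := by linarith
    have h := ((hasDerivAt_exp_neg_mul_sq (1 + l ^ 2) t).const_mul (π * l * (1 + l ^ 2))⁻¹).mul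
      (((hasDerivAt_inv h0).pow 2).sub
        (((hasDerivAt_inv h0).pow 4).const_mul (2 / (1 + l ^ 2) + 1 / l ^ 2)))
    refine h.congr_deriv ?_
    simp only [Pi.pow_apply, Pi.sub_apply]
    push_cast
    field_simp
    ring
  · have ht0 : t < 0 := by linarith
    have hlt : l * t < 0 := mul_neg_of_pos_of_neg hl ht0
    have hm := mul_le_mul_of_nonneg_left (mills_le_stdNormalCDF hlt)
      (by positivity : 0 ≤ 2 * ((√(2 * π))⁻¹ * exp (-(t ^ 2) / 2)))
    rw [← mul_assoc, snDensity_prod] at hm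
    refine le_trans ?_ hm
    have h3 : 0 ≤ -(t⁻¹ ^ 5) := by
      have : 0 < (-t)⁻¹ := inv_pos.2 (by linarith)
      have h5 : -(t⁻¹ ^ 5) = (-t)⁻¹ ^ 5 := by rw [inv_neg]; ring
      rw [h5]; positivity
    have h4 : (π * l * (1 + l ^ 2))⁻¹ * exp (-((1 + l ^ 2) * t ^ 2) / 2) *
        (-(1 + l ^ 2) * t⁻¹ + (1 + l ^ 2) / l ^ 2 * t⁻¹ ^ 3
        + 4 * (2 / (1 + l ^ 2) + 1 / l ^ 2) * t⁻¹ ^ 5) =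
        π⁻¹ * exp (-((1 + l ^ 2) * t ^ 2) / 2) * (-(l * t)⁻¹ + (l * t)⁻¹ ^ 3) -
        (π * l * (1 + l ^ 2))⁻¹ * exp (-((1 + l ^ 2) * t ^ 2) / 2) *
          (4 * (2 / (1 + l ^ 2) + 1 / l ^ 2) * -(t⁻¹ ^ 5)) := by
      have := ht0.ne
      field_simp
      ring
    rw [h4]
    have : 0 ≤ (π * l * (1 + l ^ 2))⁻¹ * exp (-((1 + l ^ 2) * t ^ 2) / 2) *
          (4 * (2 / (1 + l ^ 2) + 1 / l ^ 2) * -(t⁻¹ ^ 5)) := by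
      positivity
    linarith
  · have h1 := tendsto_inv_atBot_zero (𝕜 := ℝ)
    have h := ((tendsto_exp_neg_mul_sq_atBot hk).const_mul (π * l * (1 + l ^ 2))⁻¹).mul
      ((h1.pow 2).sub ((h1.pow 4).const_mul (2 / (1 + l ^ 2) + 1 / l ^ 2)))
    simpa using h

/-- The tail bounds after taking logarithms, in the variable `y = (1 + l²) x² / 2`:
`-log F(x) = y + log (2 π l) + log y + O(1 / y)`. -/
lemma neg_log_snCDF_bounds {l x y : ℝ} (hl : 0 < l) (hx : x < 0)
    (hy : y = (1 + l ^ 2) * x ^ 2 / 2) (hyC : 2 + (1 + l ^ 2) / l ^ 2 ≤ y) :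
    0 < snCDF l x ∧ y + log (2 * π * l) + log y ≤ -log (snCDF l x) ∧
      -log (snCDF l x) ≤ y + log (2 * π * l) + log y + (2 + (1 + l ^ 2) / l ^ 2) / y := by
  set C := 2 + (1 + l ^ 2) / l ^ 2 with hC
  have hCpos : 0 < C := by positivity
  have hy0 : 0 < y := by linarith
  have hx0 : x ≠ 0 := hx.ne
  have hk : 0 < 1 + l ^ 2 := by positivity
  have hup := snCDF_le hl hx
  have hlo := le_snCDF hl hx
  have he : -((1 + l ^ 2) * x ^ 2) / 2 = -y := by rw [hy]; ring
  have e1 : (π * l * (1 + l ^ 2))⁻¹ * exp (-((1 + l ^ 2) * x ^ 2) / 2) * x⁻¹ ^ 2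
      = exp (-y) / (2 * π * l * y) := by
    rw [he, hy]; field_simp
  have e2 : (π * l * (1 + l ^ 2))⁻¹ * exp (-((1 + l ^ 2) * x ^ 2) / 2) *
      (x⁻¹ ^ 2 - (2 / (1 + l ^ 2) + 1 / l ^ 2) * x⁻¹ ^ 4)
      = exp (-y) / (2 * π * l * y) * (1 - C / (2 * y)) := by
    rw [he, hy, hC]; field_simp
  rw [e1] at hup
  rw [e2] at hlo
  have hs : C / (2 * y) ≤ 1 / 2 := by
    rw [div_le_div_iff₀ (by positivity) (by norm_num)]; linarith
  have hA : 0 < exp (-y) / (2 * π * l * y) := by positivity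
  have hB : 0 < 1 - C / (2 * y) := by linarith
  have hpos : 0 < snCDF l x := lt_of_lt_of_le (by positivity) hlo
  have hlogA : log (exp (-y) / (2 * π * l * y)) = -(y + log (2 * π * l) + log y) := by
    rw [log_div (exp_pos _).ne' (by positivity), log_exp, log_mul (by positivity) hy0.ne']
    ring
  refine ⟨hpos, ?_, ?_⟩
  · have := log_le_log hpos hup
    linarith
  · have h1 := log_le_log (by positivity) hlo
    rw [log_mul hA.ne' hB.ne', hlogA] at h1
    have h2 := one_sub_inv_le_log_of_pos hB
    -- `-log (1 - s) ≤ s / (1 - s) ≤ 2 s` for `0 ≤ s ≤ 1 / 2`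
    have h3 : (1 - C / (2 * y))⁻¹ ≤ 1 + 2 * (C / (2 * y)) := by
      rw [inv_le_iff_one_le_mul₀ hB]
      have : 0 ≤ C / (2 * y) := by positivity
      nlinarith
    have h4 : 2 * (C / (2 * y)) = C / y := by field_simp
    linarith

/-- Inversion of `L = y + a + log y + O(1 / y)` to second order, for `√(y / L)`. -/
lemma sqrt_ratio_expansion {a C y L : ℝ} (hC : 0 ≤ C) (h1 : 1 ≤ log y) (ha : |a| ≤ log y)
    (hCy : C ≤ y) (hy : 6 * log y + 3 ≤ y) (hlo : y + a + log y ≤ L)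
    (hhi : L ≤ y + a + log y + C / y) :
    |√(y / L) - 1 + (1 / 2) * log L / L + (a / 2) / L| ≤ (8 + C) * (log L / L) ^ 2 := by
  have hy0 : 0 < y := by linarith
  obtain ⟨ha1, ha2⟩ := abs_le.1 ha
  have hδ : C / y ≤ 1 := by rwa [div_le_one hy0]
  have hyL : y ≤ L := by linarith
  have hL0 : 0 < L := by linarith
  have hL2 : L ≤ 2 * y := by linarith
  have hlog : log y ≤ log L := log_le_log hy0 hyL
  set s := 1 - y / L with hs
  set w := √(y / L) with hw
  have hw0 : 0 ≤ w := sqrt_nonneg _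
  have hw2 : w ^ 2 = 1 - s := by rw [hw, sq_sqrt (by positivity), hs]; ring
  have hsL : s * L = L - y := by rw [hs]; field_simp
  have hs0 : 0 ≤ s := by
    rw [hs, sub_nonneg, div_le_one hL0]; exact hyL
  have hs1 : s ≤ 3 * (log L / L) := by
    rw [mul_div_assoc', le_div_iff₀ hL0, hsL]; linarith
  have hs2 : s ≤ 1 / 2 := by
    have : s * L ≤ 1 / 2 * L := by rw [hsL]; linarith
    exact le_of_mul_le_mul_right this hL0
  -- second-order expansion of `√(1 - s)` at `0`
  have hA : |w - 1 + s / 2| ≤ s ^ 2 / 2 := by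
    have : w - 1 + s / 2 = -((1 - w) ^ 2 / 2) := by nlinarith
    have h1w : s = (1 - w) * (1 + w) := by nlinarith
    rw [this, abs_neg, abs_of_nonneg (by positivity), h1w, mul_pow]
    have : 0 ≤ (1 - w) ^ 2 := sq_nonneg _
    nlinarith [mul_nonneg this hw0, mul_nonneg this (sq_nonneg w)]
  have hB : 0 ≤ log L - log y ∧ log L - log y ≤ 2 * s := by
    refine ⟨by linarith, ?_⟩
    have hyL0 : 0 < y / L := by positivity
    have h := one_sub_inv_le_log_of_pos hyL0
    rw [log_div hy0.ne' hL0.ne', inv_div] at h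
    have : L / y ≤ 1 + 2 * s := by
      rw [div_le_iff₀ hy0]
      have : y = (1 - s) * L := by linarith
      nlinarith [mul_nonneg (mul_nonneg hs0 (by linarith : 0 ≤ 1 - 2 * s)) hL0.le]
    linarith
  have hδL : L - y - a - log y ≤ 2 * C / L := by
    have : C / y ≤ 2 * C / L := by
      rw [div_le_div_iff₀ hy0 hL0]; nlinarith
    linarith
  have hM : 1 ≤ log L := by linarith
  have hdecomp : w - 1 + (1 / 2) * log L / L + (a / 2) / L =
      (w - 1 + s / 2) + ((log L - log y) - (L - y - a - log y)) / 2 * (1 / L) := by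
    have : s / 2 = (L - y) / 2 * (1 / L) := by rw [← hsL]; field_simp
    rw [this]; ring
  set p := log L / L with hp
  set q := 1 / L with hq
  have hq0 : 0 < q := by positivity
  have hqp : q ≤ p := div_le_div_of_nonneg_right hM hL0.le
  have hCq : 2 * C / L = 2 * C * q := by rw [hq]; ring
  rw [hCq] at hδL
  have hp0 : 0 ≤ p := hq0.le.trans hqp
  have hs_sq : s ^ 2 ≤ 9 * p ^ 2 := by
    calc s ^ 2 ≤ (3 * p) ^ 2 := pow_le_pow_left₀ hs0 hs1 2
      _ = 9 * p ^ 2 := by ring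
  have hq2 : q * q ≤ p ^ 2 := by
    rw [sq]; exact mul_le_mul hqp hqp hq0.le hp0
  have hsq : s * q ≤ 3 * p ^ 2 := by
    calc s * q ≤ 3 * p * p := mul_le_mul hs1 hqp hq0.le (by positivity)
      _ = 3 * p ^ 2 := by ring
  obtain ⟨hA1, hA2⟩ := abs_le.1 hA
  have hB1 := mul_nonneg hB.1 hq0.le
  have hB2 := mul_le_mul_of_nonneg_right hB.2 hq0.le
  have hD1 : 0 ≤ (L - y - a - log y) * q := mul_nonneg (by linarith) hq0.le
  have hD2 := mul_le_mul_of_nonneg_right hδL hq0.le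
  have hCq2 : C * (q * q) ≤ C * p ^ 2 := mul_le_mul_of_nonneg_left hq2 hC
  clear_value p q s w
  rw [hdecomp, abs_le]
  have hp2 := sq_nonneg p
  have e1 : ((log L - log y) - (L - y - a - log y)) / 2 * q =
    (log L - log y) * q / 2 - (L - y - a - log y) * q / 2 := by ring
  have e2 : (8 + C) * p ^ 2 = 8 * p ^ 2 + C * p ^ 2 := by ring
  have hB3 : (log L - log y) * q ≤ 6 * p ^ 2 := by linarith
  have hD3 : (L - y - a - log y) * q ≤ 2 * (C * p ^ 2) := by linarith
  have hCp : 0 ≤ C * p ^ 2 := mul_nonneg hC hp2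
  rw [e1, e2]
  constructor <;> linarith

/-- The quantile function tends to `-∞` at `0⁺`, by monotonicity and positivity of the cdf. -/
lemma tendsto_snQuantile {l : ℝ} (hl : 0 < l) {Q : ℝ → ℝ}
    (hQ : ∀ u ∈ Set.Ioo (0 : ℝ) 1, snCDF l (Q u) = u) : Tendsto Q (𝓝[>] 0) atBot := by
  have hT : Tendsto (fun x : ℝ => (1 + l ^ 2) * x ^ 2 / 2) atBot atTop := by
    have h : Tendsto (fun t : ℝ => t ^ 2) atBot atTop := by
      have := (tendsto_pow_atTop (α := ℝ) (n := 2) (by norm_num)).comp tendsto_neg_atBot_atTop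
      exact this.congr fun t => by simp
    have := h.const_mul_atTop (r := (1 + l ^ 2) / 2) (by positivity)
    exact this.congr fun t => by ring
  refine tendsto_atBot.2 fun M => ?_
  obtain ⟨x, hxM, hx0, hxy⟩ := ((eventually_le_atBot M).and ((eventually_lt_atBot 0).and
    (hT.eventually_ge_atTop (2 + (1 + l ^ 2) / l ^ 2)))).exists
  have hpos := (neg_log_snCDF_bounds hl hx0 rfl hxy).1
  filter_upwards [Ioo_mem_nhdsGT hpos, Ioo_mem_nhdsGT one_pos] with u hu hu1
  by_contra! hcon
  have := snCDF_mono l (hxM.trans hcon.le)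
  rw [hQ u hu1] at this
  exact absurd hu.2 (not_lt.2 this)

/-- Quantile expansion of `SN(l)` for `l > 0`, as `u → 0⁺`. -/
theorem snQuantile_expansion_pos (l : ℝ) (hl : 0 < l) (Q : ℝ → ℝ)
    (hQ : ∀ u ∈ Set.Ioo (0 : ℝ) 1, snCDF l (Q u) = u) :
    ∃ r : ℝ → ℝ,
      (∀ᶠ u in 𝓝[>] (0 : ℝ), Q u =
        -(1 / Real.sqrt (1 + l ^ 2)) * Real.sqrt (-2 * Real.log u) *
          (1 + (1 / 2) * Real.log (-Real.log u) / Real.log u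
            + (Real.log (2 * Real.pi * l) / 2) / Real.log u + r u)) ∧
      r =O[𝓝[>] (0 : ℝ)] fun u => (Real.log (-Real.log u) / Real.log u) ^ 2 := by
  have hk : 0 < 1 + l ^ 2 := by positivity
  refine ⟨fun u => √((1 + l ^ 2) * Q u ^ 2 / 2 / -log u) - 1
    + (1 / 2) * log (-log u) / -log u + (log (2 * π * l) / 2) / -log u, ?_, ?_⟩
  · filter_upwards [Ioo_mem_nhdsGT one_pos, (tendsto_snQuantile hl hQ).eventually_lt_atBot 0]
      with u hu hQ0
    have hL : 0 < -log u := neg_pos.2 (log_neg hu.1 hu.2)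
    have e : √((1 + l ^ 2) * Q u ^ 2 / 2 / -log u) =
        √(1 + l ^ 2) * -Q u / √(-2 * log u) := by
      rw [show (1 + l ^ 2) * Q u ^ 2 / 2 / -log u = (1 + l ^ 2) * (-Q u) ^ 2 / (-2 * log u) by
        field_simp, sqrt_div' _ (by linarith), sqrt_mul hk.le, sqrt_sq (by linarith)]
    rw [e]
    have h1 : √(1 + l ^ 2) ≠ 0 := (sqrt_pos.2 hk).ne'
    have h2 : √(-2 * log u) ≠ 0 := (sqrt_pos.2 (by linarith)).ne'
    simp only [div_neg]
    have h3 : -(1 / √(1 + l ^ 2)) * √(-2 * log u) * (√(1 + l ^ 2) * -Q u / √(-2 * log u)) = Q u := by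
      generalize √(-2 * log u) = B at h2 ⊢
      field_simp
    linear_combination -h3
  · have hT : Tendsto (fun u => (1 + l ^ 2) * Q u ^ 2 / 2) (𝓝[>] 0) atTop := by
      have h := (tendsto_pow_atTop (α := ℝ) (n := 2) (by norm_num)).comp
        (tendsto_neg_atBot_atTop.comp (tendsto_snQuantile hl hQ))
      have := h.const_mul_atTop (r := (1 + l ^ 2) / 2) (by positivity)
      exact this.congr fun t => by simp; ring
    have hlogT := tendsto_log_atTop.comp hT
    have hsmall : ∀ᶠ y : ℝ in atTop, 6 * log y + 3 ≤ y := by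
      have h := isLittleO_log_id_atTop.bound (by norm_num : (0 : ℝ) < 1 / 12)
      filter_upwards [h, eventually_ge_atTop 6] with y hy hy6
      have : log y ≤ 1 / 12 * y := by
        simpa [abs_of_nonneg (by linarith : 0 ≤ y)] using (le_abs_self _).trans hy
      linarith
    refine IsBigO.of_bound (8 + (2 + (1 + l ^ 2) / l ^ 2)) ?_
    filter_upwards [Ioo_mem_nhdsGT one_pos, (tendsto_snQuantile hl hQ).eventually_lt_atBot 0,
      hT.eventually_ge_atTop (2 + (1 + l ^ 2) / l ^ 2), hlogT.eventually_ge_atTop 1,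
      hlogT.eventually_ge_atTop |log (2 * π * l)|, hT.eventually hsmall]
      with u hu hQ0 hC h1 ha hy
    obtain ⟨-, hlo, hhi⟩ := neg_log_snCDF_bounds hl hQ0 rfl hC
    rw [hQ u hu] at hlo hhi
    have h := sqrt_ratio_expansion (by positivity) h1 ha hC hy hlo hhi
    rw [Real.norm_eq_abs, Real.norm_of_nonneg (sq_nonneg _)]
    refine h.trans_eq ?_
    rw [div_neg, neg_sq]
end

section
/- Suppose α₁ ≠ 0. Then at least one of the two numbers γ₁ - ρ and α₁·γ₁ + α₂ is strictly positive. Moreover, whenever γ₁ - ρ ≤ 0, one has α₁ > 0 and α₁·γ₁ + α₂ > 0. -/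
open Real

/-!
Write `A = α₁ + ρ α₂`, `B = α₂ + ρ α₁`, `D₁ = 1 + α₂² (1 - ρ²)`, `D₂ = 1 + α₁² (1 - ρ²)`.
Both `D₁ + A²` and `D₂ + B²` equal `Q = 1 + α₁² + α₂² + 2 ρ α₁ α₂`, so `1 + λ₁² = Q / D₁` and
`1 + λ₂² = Q / D₂`.  The first claim follows from the second, so suppose `γ₁ ≤ ρ`; then
`0 < γ₁ < 1`, which leaves only the two branches with `λ₁ > 0`.

* If `λ₂ > 0`, then `γ₁² = D₁ / D₂ ≤ ρ²`, which simplifies to `1 + α₂² ≤ ρ² α₁²`.  Hence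
  `|α₂| < ρ |α₁|`, and `B > 0` forces `α₁ > 0`.  Moreover `α₁² D₁ - α₂² D₂ = α₁² - α₂² > 0`, that
  is, `α₁ γ₁ > |α₂|`.
* If `λ₂ ≤ 0`, then `γ₁² = D₁ / Q ≤ ρ²` reads `(1 - ρ²) D₁ ≤ ρ² A²`, whence
  `(1 - ρ²) |α₂| < ρ A`.  Since `B = ρ A + (1 - ρ²) α₂`, this gives `B > 0`, a contradiction.
-/

/-- The relation `1 + λ² = (D + A²) / D` for `λ = A / √D`, without division. -/
lemma one_add_sq_mul {A D l : ℝ} (hD : 0 < D) (hl : l = A / Real.sqrt D) :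
    (1 + l ^ 2) * D = D + A ^ 2 := by
  rw [hl, div_pow, Real.sq_sqrt hD.le]
  field_simp

lemma pos_iff_of_eq_div_sqrt {A D l : ℝ} (hD : 0 < D) (hl : l = A / Real.sqrt D) :
    0 < l ↔ 0 < A := by
  rw [hl, div_pos_iff_of_pos_right (Real.sqrt_pos.2 hD)]

/-- The branch `λ₁, λ₂ > 0`, where `γ² = D₁ / D₂`. -/
lemma pos_of_le_of_both_pos {ρ a b g : ℝ} (h1 : ρ < 1) (hg : 0 < g) (hgr : g ≤ ρ)
    (hB : 0 < b + ρ * a)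
    (hg2 : g ^ 2 * (1 + a ^ 2 * (1 - ρ ^ 2)) = 1 + b ^ 2 * (1 - ρ ^ 2)) :
    0 < a ∧ 0 < a * g + b := by
  have hρ : 0 < ρ := hg.trans_le hgr
  have hr : 0 < 1 - ρ ^ 2 := by nlinarith
  have hD : 0 < 1 + a ^ 2 * (1 - ρ ^ 2) := by positivity
  have hgs : g ^ 2 ≤ ρ ^ 2 := by gcongr
  have key : 1 + b ^ 2 ≤ (ρ * a) ^ 2 := by
    have h := mul_le_mul_of_nonneg_right hgs hD.le
    have h' : (1 - ρ ^ 2) * (1 + b ^ 2) ≤ (1 - ρ ^ 2) * (ρ * a) ^ 2 := by linarith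
    exact le_of_mul_le_mul_left h' hr
  have ha : 0 < ρ * a := by
    by_contra! h
    nlinarith
  have ha' : 0 < a := pos_of_mul_pos_right ha hρ.le
  refine ⟨ha', ?_⟩
  have hab : b ^ 2 < a ^ 2 := by nlinarith [mul_pos (pow_pos ha' 2) hr]
  have hlt : b ^ 2 < (a * g) ^ 2 := by
    have h : b ^ 2 * (1 + a ^ 2 * (1 - ρ ^ 2)) < (a * g) ^ 2 * (1 + a ^ 2 * (1 - ρ ^ 2)) := by
      rw [mul_pow, mul_assoc, hg2]
      linarith
    exact lt_of_mul_lt_mul_right h hD.le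
  linarith [(abs_lt_of_sq_lt_sq' hlt (mul_pos ha' hg).le).1]

/-- The branch `λ₁ > 0 ≥ λ₂`, where `γ² = D₁ / Q` with `Q = D₁ + A²`, is incompatible with
`γ ≤ ρ`. -/
lemma false_of_le_of_neg {ρ a b g : ℝ} (h1 : ρ < 1) (hg : 0 < g) (hgr : g ≤ ρ)
    (hA : 0 < a + ρ * b) (hB : b + ρ * a ≤ 0)
    (hg2 : g ^ 2 * (1 + b ^ 2 * (1 - ρ ^ 2) + (a + ρ * b) ^ 2) = 1 + b ^ 2 * (1 - ρ ^ 2)) :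
    False := by
  have hρ : 0 < ρ := hg.trans_le hgr
  have hr : 0 < 1 - ρ ^ 2 := by nlinarith
  have hgs : g ^ 2 ≤ ρ ^ 2 := by gcongr
  have hQ : 0 ≤ 1 + b ^ 2 * (1 - ρ ^ 2) + (a + ρ * b) ^ 2 := by positivity
  have h := mul_le_mul_of_nonneg_right hgs hQ
  have hlt : ((1 - ρ ^ 2) * b) ^ 2 < (ρ * (a + ρ * b)) ^ 2 := by linarith
  linarith [(abs_lt_of_sq_lt_sq' hlt (mul_pos hρ hA).le).1]

/-- Lemma 2 of the paper: if `α₁ ≠ 0` then at least one of `γ₁ - ρ` and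
`α₁·γ₁ + α₂` is strictly positive, and whenever `γ₁ - ρ ≤ 0` we have
`α₁ > 0` and `α₁·γ₁ + α₂ > 0`. -/
theorem at_least_one_positive (ρ α₁ α₂ : ℝ) (hρ : ρ ∈ Set.Ioo (-1 : ℝ) 1)
    (hα₁ : α₁ ≠ 0) (l₁ l₂ γ₁ : ℝ)
    (hl₁ : l₁ = (α₁ + ρ * α₂) / Real.sqrt (1 + α₂ ^ 2 * (1 - ρ ^ 2)))
    (hl₂ : l₂ = (α₂ + ρ * α₁) / Real.sqrt (1 + α₁ ^ 2 * (1 - ρ ^ 2)))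
    (hγ₁ : γ₁ =
      if 0 < l₁ ∧ 0 < l₂ then Real.sqrt ((1 + l₂ ^ 2) / (1 + l₁ ^ 2))
      else if l₁ ≤ 0 ∧ 0 < l₂ then Real.sqrt (1 + l₂ ^ 2)
      else if 0 < l₁ ∧ l₂ ≤ 0 then 1 / Real.sqrt (1 + l₁ ^ 2)
      else 1) :
    (0 < γ₁ - ρ ∨ 0 < α₁ * γ₁ + α₂) ∧
      (γ₁ - ρ ≤ 0 → 0 < α₁ ∧ 0 < α₁ * γ₁ + α₂) := by
  obtain ⟨h0, h1⟩ := hρ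
  -- The second claim implies the first.
  suffices H : γ₁ - ρ ≤ 0 → 0 < α₁ ∧ 0 < α₁ * γ₁ + α₂ from
    ⟨(lt_or_ge 0 (γ₁ - ρ)).imp_right fun h => (H h).2, H⟩
  intro hle
  have hr : 0 < 1 - ρ ^ 2 := by nlinarith
  have hD₁ : 0 < 1 + α₂ ^ 2 * (1 - ρ ^ 2) := by positivity
  have hD₂ : 0 < 1 + α₁ ^ 2 * (1 - ρ ^ 2) := by positivity
  have e₁ := one_add_sq_mul hD₁ hl₁
  have e₂ := one_add_sq_mul hD₂ hl₂
  have p₁ := pos_iff_of_eq_div_sqrt hD₁ hl₁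
  have p₂ := pos_iff_of_eq_div_sqrt hD₂ hl₂
  have q₁ : 0 < 1 + l₁ ^ 2 := by positivity
  have q₂ : 0 < 1 + l₂ ^ 2 := by positivity
  split_ifs at hγ₁ with c₁ c₂ c₃
  · have hg : 0 < γ₁ := hγ₁ ▸ Real.sqrt_pos.2 (div_pos q₂ q₁)
    have hsq : γ₁ ^ 2 * (1 + l₁ ^ 2) = 1 + l₂ ^ 2 := by
      rw [hγ₁, Real.sq_sqrt (div_pos q₂ q₁).le, div_mul_cancel₀ _ q₁.ne']
    refine pos_of_le_of_both_pos h1 hg (by linarith) (p₂.1 c₁.2) ?_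
    have hQ : (1 + l₂ ^ 2) * (1 + α₁ ^ 2 * (1 - ρ ^ 2))
        = (1 + l₁ ^ 2) * (1 + α₂ ^ 2 * (1 - ρ ^ 2)) := by
      rw [e₁, e₂]; ring
    refine mul_left_cancel₀ q₁.ne' ?_
    rw [← hQ, ← hsq]
    ring
  · have : 1 ≤ γ₁ := hγ₁ ▸ Real.one_le_sqrt.2 (by nlinarith [sq_nonneg l₂])
    linarith
  · have hg : 0 < γ₁ := hγ₁ ▸ one_div_pos.2 (Real.sqrt_pos.2 q₁)
    have hsq : γ₁ ^ 2 * (1 + l₁ ^ 2) = 1 := by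
      rw [hγ₁, div_pow, Real.sq_sqrt q₁.le, one_pow, one_div_mul_cancel q₁.ne']
    refine (false_of_le_of_neg h1 hg (by linarith) (p₁.1 c₃.1)
      (not_lt.1 fun h => c₃.2.not_gt (p₂.2 h)) ?_).elim
    rw [← e₁, ← mul_assoc, hsq, one_mul]
  · linarith
end

section
/- For all x, y ∈ ℝ, writing A = x - ρ·y and B = α₁·x + α₂·y, one has the identity λ₂²·y² + ((1-ρ²)/(1+α₁²(1-ρ²)))·(A/(1-ρ²) + α₁·B)² = A²/(1-ρ²) + B². -/
open Real

/-- Lemma 3 of the paper (case `i = 1`): the exponent identity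
`λ₂²·y² + ((1-ρ²)/(1+α₁²(1-ρ²)))·(A/(1-ρ²) + α₁·B)² = A²/(1-ρ²) + B²`
with `A = x - ρy` and `B = α₁x + α₂y`. -/
theorem exponents_equivalency (ρ α₁ α₂ : ℝ) (hρ : ρ ∈ Set.Ioo (-1 : ℝ) 1)
    (l₂ : ℝ) (hl₂ : l₂ = (α₂ + ρ * α₁) / Real.sqrt (1 + α₁ ^ 2 * (1 - ρ ^ 2))) :
    ∀ x y : ℝ,
      l₂ ^ 2 * y ^ 2 +
        ((1 - ρ ^ 2) / (1 + α₁ ^ 2 * (1 - ρ ^ 2))) *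
          ((x - ρ * y) / (1 - ρ ^ 2) + α₁ * (α₁ * x + α₂ * y)) ^ 2 =
      (x - ρ * y) ^ 2 / (1 - ρ ^ 2) + (α₁ * x + α₂ * y) ^ 2 := by
  intro x y
  have hs : 0 < 1 - ρ ^ 2 := by nlinarith [hρ.1, hρ.2]
  have hD : 0 < 1 + α₁ ^ 2 * (1 - ρ ^ 2) := by positivity
  -- With `A = x - ρy`, `B = α₁x + α₂y`, the numerator of `l₂ * y` is `B - α₁A`, and
  -- `(B - α₁A)² + s(A/s + α₁B)² = (1 + α₁²s)(A²/s + B²)` for `s = 1 - ρ²`.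
  rw [hl₂, div_pow, Real.sq_sqrt hD.le]
  have hs' := hs.ne'
  have hD' := hD.ne'
  field_simp
  ring
end

section
/- For every ρ ∈ (-1,1) and all α₁, α₂ ∈ ℝ, √((1+α₁²(1-ρ²))·(1+α₂²(1-ρ²))) + α₁·α₂·(1-ρ²) - ρ > 0. -/
open Real

/-- The key inequality in the proof of Lemma 5 of the paper:
`√((1+α₁²(1-ρ²))·(1+α₂²(1-ρ²))) + α₁α₂(1-ρ²) - ρ > 0` for `ρ ∈ (-1,1)`. -/
theorem key_inequality (ρ α₁ α₂ : ℝ) (hρ : ρ ∈ Set.Ioo (-1 : ℝ) 1) :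
    0 < Real.sqrt ((1 + α₁ ^ 2 * (1 - ρ ^ 2)) * (1 + α₂ ^ 2 * (1 - ρ ^ 2)))
        + α₁ * α₂ * (1 - ρ ^ 2) - ρ := by
  obtain ⟨h₁, h₂⟩ := hρ
  have hk : 0 ≤ 1 - ρ ^ 2 := by nlinarith
  -- Cauchy–Schwarz for `(1, α₁√(1-ρ²))` and `(1, -α₂√(1-ρ²))`; the defect between the squares
  -- is `(1-ρ²)(α₁+α₂)²`. It bounds the whole expression below by `1 - ρ`.
  have key : 1 - α₁ * α₂ * (1 - ρ ^ 2) ≤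
      Real.sqrt ((1 + α₁ ^ 2 * (1 - ρ ^ 2)) * (1 + α₂ ^ 2 * (1 - ρ ^ 2))) := by
    apply Real.le_sqrt_of_sq_le
    linarith [mul_nonneg hk (sq_nonneg (α₁ + α₂))]
  linarith
end

section
/- Suppose α₁ ≠ 0. If λ₂ ≥ 0, or if α₁·γ₁ + α₂ ≥ 0, then β₁ > 0. -/
open Real

/-!
Write `s = 1 - ρ²`, `A = 1 + α₁² s`, `B = 1 + α₂² s`, `c = ρ - s α₁ α₂` and
`Q = α₁² + 2ρα₁α₂ + α₂²`. Then `s β₁ = γ₁ A - c`, and `A B - c² = s (1 + Q) > 0`.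
Moreover `1 + λ₁² = (1 + Q) / B` and `1 + λ₂² = (1 + Q) / A`.

If `λ₂ ≥ 0`, every branch of the definition of `γ₁` gives
`γ₁² ≥ (1 + λ₂²) / (1 + λ₁²) = B / A`, so `(γ₁ A)² ≥ A B > c²` and `β₁ > 0`.

If `λ₂ < 0`, then `α₁ γ₁ + α₂ ≥ 0` and `α₂ + ρ α₁ < 0` give `α₁ (γ₁ - ρ) > 0`. When `α₁ > 0`,
both summands of `β₁` are nonnegative and the first is positive. When `α₁ < 0`, we have `γ₁ < ρ`,
so `ρ > 0` and `γ₁ ≠ 1`, which forces `λ₁ > 0`; but `ρ α₂ ≤ -ρ² α₁` yields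
`α₁ + ρ α₂ ≤ s α₁ < 0`, a contradiction.
-/

theorem one_add_div_sqrt_sq {x y : ℝ} (hy : 0 < y) :
    1 + (x / Real.sqrt y) ^ 2 = (y + x ^ 2) / y := by
  rw [div_pow, Real.sq_sqrt hy.le]
  field_simp

/-- If `s β₁ = γ₁ A - c`, the bound `γ₁² A ≥ B` suffices for positivity of `β₁`, because
`A B - c² = s (1 + Q)` is positive. -/
theorem beta_pos_of_sq_bound {ρ a b g : ℝ} (hs : 0 < 1 - ρ ^ 2) (hg : 0 ≤ g)
    (h : 1 + b ^ 2 * (1 - ρ ^ 2) ≤ g ^ 2 * (1 + a ^ 2 * (1 - ρ ^ 2))) :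
    0 < (g - ρ) / (1 - ρ ^ 2) + a * (a * g + b) := by
  have hA : 0 < 1 + a ^ 2 * (1 - ρ ^ 2) := by positivity
  have key : ρ - (1 - ρ ^ 2) * a * b < g * (1 + a ^ 2 * (1 - ρ ^ 2)) := by
    refine lt_of_pow_lt_pow_left₀ 2 (by positivity) ?_
    have h2 := mul_le_mul_of_nonneg_right h hA.le
    have h3 : 0 < (1 - ρ ^ 2) * (1 + ((a + ρ * b) ^ 2 + b ^ 2 * (1 - ρ ^ 2))) := by positivity
    nlinarith
  have e : (g - ρ) / (1 - ρ ^ 2) + a * (a * g + b)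
      = (g * (1 + a ^ 2 * (1 - ρ ^ 2)) - (ρ - (1 - ρ ^ 2) * a * b)) / (1 - ρ ^ 2) := by
    field_simp
    ring
  rw [e]
  exact div_pos (by linarith) hs

/-- Lemma 5 of the paper: with `α₁ ≠ 0`, if `λ₂ ≥ 0` or `α₁γ₁ + α₂ ≥ 0`
then `β₁ > 0`. -/
theorem beta_one_positive (ρ α₁ α₂ : ℝ) (hρ : ρ ∈ Set.Ioo (-1 : ℝ) 1)
    (hα₁ : α₁ ≠ 0) (l₁ l₂ γ₁ β₁ : ℝ)
    (hl₁ : l₁ = (α₁ + ρ * α₂) / Real.sqrt (1 + α₂ ^ 2 * (1 - ρ ^ 2)))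
    (hl₂ : l₂ = (α₂ + ρ * α₁) / Real.sqrt (1 + α₁ ^ 2 * (1 - ρ ^ 2)))
    (hγ₁ : γ₁ =
      if 0 < l₁ ∧ 0 < l₂ then Real.sqrt ((1 + l₂ ^ 2) / (1 + l₁ ^ 2))
      else if l₁ ≤ 0 ∧ 0 < l₂ then Real.sqrt (1 + l₂ ^ 2)
      else if 0 < l₁ ∧ l₂ ≤ 0 then 1 / Real.sqrt (1 + l₁ ^ 2)
      else 1)
    (hβ₁ : β₁ = (γ₁ - ρ) / (1 - ρ ^ 2) + α₁ * (α₁ * γ₁ + α₂))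
    (h : 0 ≤ l₂ ∨ 0 ≤ α₁ * γ₁ + α₂) :
    0 < β₁ := by
  have hs : 0 < 1 - ρ ^ 2 := by nlinarith [hρ.1, hρ.2]
  have hA : 0 < 1 + α₁ ^ 2 * (1 - ρ ^ 2) := by positivity
  have hB : 0 < 1 + α₂ ^ 2 * (1 - ρ ^ 2) := by positivity
  have hγ0 : 0 ≤ γ₁ := by
    rw [hγ₁]; split_ifs <;> positivity
  subst hβ₁
  rcases le_or_gt 0 l₂ with h2 | h2
  · have hbound : 1 + l₂ ^ 2 ≤ γ₁ ^ 2 * (1 + l₁ ^ 2) := by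
      have hp1 : 0 < 1 + l₁ ^ 2 := by positivity
      rw [hγ₁]
      split_ifs with c1 c2 c3
      · rw [Real.sq_sqrt (by positivity), div_mul_cancel₀ _ hp1.ne']
      · rw [Real.sq_sqrt (by positivity)]
        nlinarith [mul_nonneg (sq_nonneg l₁) (sq_nonneg l₂), sq_nonneg l₁]
      · have : l₂ = 0 := le_antisymm c3.2 h2
        rw [div_pow, Real.sq_sqrt hp1.le, this]
        field_simp
        norm_num
      · have : l₂ = 0 := by
          by_contra hne
          have hpos : 0 < l₂ := lt_of_le_of_ne h2 (Ne.symm hne)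
          rcases le_or_gt l₁ 0 with h1 | h1
          · exact c2 ⟨h1, hpos⟩
          · exact c1 ⟨h1, hpos⟩
        rw [this]
        nlinarith [sq_nonneg l₁]
    refine beta_pos_of_sq_bound hs hγ0 ?_
    rw [hl₁, hl₂, one_add_div_sqrt_sq hA, one_add_div_sqrt_sq hB, ← mul_div_assoc,
      div_le_div_iff₀ hA hB] at hbound
    -- both numerators equal `1 + Q`, which cancels
    have hQ : 0 < 1 + α₂ ^ 2 * (1 - ρ ^ 2) + (α₁ + ρ * α₂) ^ 2 := by positivity
    refine le_of_mul_le_mul_right ?_ hQ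
    linarith
  · have hB0 : 0 ≤ α₁ * γ₁ + α₂ := h.resolve_left (not_le.mpr h2)
    have hn2 : α₂ + ρ * α₁ < 0 := by
      by_contra hc
      rw [hl₂] at h2
      exact absurd h2 (not_lt.mpr (div_nonneg (not_lt.mp hc) (Real.sqrt_nonneg _)))
    have hmul : 0 < α₁ * (γ₁ - ρ) := by linarith
    rcases lt_or_gt_of_ne hα₁ with ha | ha
    · exfalso
      have hgρ : γ₁ < ρ := by
        by_contra hc
        nlinarith
      have hn1 : α₁ + ρ * α₂ ≤ 0 := by nlinarith
      have hl1 : l₁ ≤ 0 := by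
        rw [hl₁]
        exact div_nonpos_of_nonpos_of_nonneg hn1 (Real.sqrt_nonneg _)
      rw [if_neg (fun c => absurd c.1 (not_lt.mpr hl1)),
        if_neg (fun c => absurd c.2 (not_lt.mpr h2.le)),
        if_neg (fun c => absurd c.1 (not_lt.mpr hl1))] at hγ₁
      linarith [hρ.2]
    · have hgρ : 0 < γ₁ - ρ := pos_of_mul_pos_right hmul ha.le
      exact add_pos_of_pos_of_nonneg (div_pos hgρ hs) (mul_nonneg ha.le hB0)
end

section
/- Let c ∈ ℝ and k ∈ ℝ, and let a, b : (0,1) → ℝ be functions with a(u) < 0 for all u, a(u) → -∞ as u → 0⁺, and b(u)/a(u) → k as u → 0⁺. Set v(u) = (a(u)·(1+c²) + c·b(u))/√(1+c²) and I(u) = ∫_{-∞}^{a(u)} Φ(x)·(2π)^{-1/2}·e^{-(c·x+b(u))²/2} dx. If v(u) → 0 as u → 0⁺ (which forces c·k = -(1+c²) ≠ 0), then I(u) ~ √(1+c²)·e^{-b(u)²/(2(1+c²))} / (2·√(2π)·|a(u)|·|c·k|) as u → 0⁺, where f ~ g means f/g → 1. -/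
/-!
The idea is to put both the distribution function and the outer integral on a fixed half-line,
where dominated convergence applies.

For `x < 0` the substitution `t = x + w / x` gives `Φ(x) = φ(x) / |x| * N(x)` with
`N(x) = ∫_{w > 0} exp (-w - w² / (2 x²))` (`cdf_eq`). Here `0 ≤ N ≤ 1`, and `N(x) → 1` as
`x → -∞`, which is Mills' ratio. With `s = 1 + c²`, completing the square yields
`x² + (c x + b)² = (s x + c b)² / s + b² / s`, so that after the substitution `x = a - r` the
quotient in the theorem is, once `|c k| = s` and with `v = (s a + c b) / √s`,
`∫_{r > 0} N(a - r) * (a / (a - r)) * (2 √s / √(2π)) * exp (-(v - √s r)² / 2)`.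
The first two factors lie in `[0, 1]` and tend to `1`, the last one is dominated by
`exp (1 / 2) * exp (-s r² / 4)` when `|v| ≤ 1`, and the limit is twice a normalised Gaussian
integral over a half-line, hence `1`. The identity `c k = -s` comes from dividing `v → 0` by `a → -∞`.
-/

open Real Filter Topology MeasureTheory

lemma setIntegral_Iic_eq_Ioi (f : ℝ → ℝ) (a : ℝ) :
    ∫ x in Set.Iic a, f x = ∫ r in Set.Ioi (0 : ℝ), f (a - r) := by
  have h := (Measure.measurePreserving_sub_left (volume : Measure ℝ) a).setIntegral_preimage_emb
    (MeasurableEquiv.subLeft a).measurableEmbedding f (Set.Iic a)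
  rw [← h, ← integral_Ici_eq_integral_Ioi]
  congr 2
  ext r
  simp

/-- The Mills ratio of the normal law at `x < 0`, normalised by the factor `|x|`. -/
noncomputable def millsN (x : ℝ) : ℝ :=
  ∫ w in Set.Ioi (0 : ℝ), Real.exp (-w - w ^ 2 / (2 * x ^ 2))

lemma integrable_exp_neg_Ioi :
    Integrable (fun w : ℝ => Real.exp (-w)) (volume.restrict (Set.Ioi (0 : ℝ))) := by
  exact integrableOn_exp_neg_Ioi 0

lemma millsN_nonneg (x : ℝ) : 0 ≤ millsN x :=
  integral_nonneg fun _ => (Real.exp_pos _).le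

lemma millsN_le_one (x : ℝ) : millsN x ≤ 1 := by
  have h : ∫ w in Set.Ioi (0 : ℝ), Real.exp (-w) = 1 := integral_exp_neg_Ioi_zero
  rw [← h]
  refine integral_mono_of_nonneg (ae_of_all _ fun _ => (Real.exp_pos _).le)
    integrable_exp_neg_Ioi (ae_of_all _ fun w => ?_)
  apply Real.exp_le_exp.2
  have : 0 ≤ w ^ 2 / (2 * x ^ 2) := by positivity
  linarith

lemma tendsto_millsN : Tendsto millsN atBot (𝓝 1) := by
  have h : ∫ w in Set.Ioi (0 : ℝ), Real.exp (-w) = 1 := integral_exp_neg_Ioi_zero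
  rw [← h]
  refine tendsto_integral_filter_of_dominated_convergence (fun w => Real.exp (-w)) ?_ ?_
    integrable_exp_neg_Ioi ?_
  · exact .of_forall fun x => (by fun_prop : Measurable _).aestronglyMeasurable
  · refine .of_forall fun x => ae_of_all _ fun w => ?_
    rw [Real.norm_of_nonneg (Real.exp_pos _).le]
    apply Real.exp_le_exp.2
    have : 0 ≤ w ^ 2 / (2 * x ^ 2) := by positivity
    linarith
  · refine ae_of_all _ fun w => ?_
    have h1 : Tendsto (fun x : ℝ => 2 * x ^ 2) atBot atTop := by
      have := (tendsto_pow_atTop (α := ℝ) two_ne_zero).comp tendsto_neg_atBot_atTop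
      exact (this.const_mul_atTop two_pos).congr fun x => by simp
    have h2 : Tendsto (fun x : ℝ => w ^ 2 / (2 * x ^ 2)) atBot (𝓝 0) := h1.const_div_atTop _
    have h3 : Tendsto (fun x : ℝ => -w - w ^ 2 / (2 * x ^ 2)) atBot (𝓝 (-w)) := by
      simpa using h2.const_sub (-w)
    exact (Real.continuous_exp.tendsto _).comp h3

/-- The distribution function in terms of its Mills ratio. -/
lemma cdf_eq {x : ℝ} (hx : x < 0) :
    stdNormalCDF x =
      (Real.sqrt (2 * Real.pi))⁻¹ * Real.exp (-(x ^ 2) / 2) * (-x)⁻¹ * millsN x := by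
  have hx' : 0 < -x := neg_pos.2 hx
  have hx0 : x ≠ 0 := hx.ne
  unfold stdNormalCDF millsN
  rw [setIntegral_Iic_eq_Ioi]
  have h := integral_comp_mul_left_Ioi (fun r : ℝ =>
    (Real.sqrt (2 * Real.pi))⁻¹ * Real.exp (-((x - r) ^ 2) / 2)) 0 (inv_pos.2 hx')
  rw [mul_zero, inv_inv, smul_eq_mul] at h
  rw [← inv_mul_cancel_left₀ hx'.ne' (∫ r in Set.Ioi (0 : ℝ), _), ← h, ← integral_const_mul,
    ← integral_const_mul]
  congr 1
  ext w
  have : -((x - (-x)⁻¹ * w) ^ 2) / 2 = -(x ^ 2) / 2 + (-w - w ^ 2 / (2 * x ^ 2)) := by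
    field_simp
    ring
  rw [this, Real.exp_add]
  ring

lemma measurable_cdf : Measurable stdNormalCDF := by
  have hint : Integrable (fun t : ℝ =>
      (Real.sqrt (2 * Real.pi))⁻¹ * Real.exp (-(t ^ 2) / 2)) := by
    refine Integrable.const_mul ?_ _
    convert integrable_exp_neg_mul_sq (b := 1 / 2) (by norm_num) using 3
    ring
  refine Monotone.measurable fun x y hxy => ?_
  refine setIntegral_mono_set hint.integrableOn (ae_of_all _ fun t => ?_)
    (Set.Iic_subset_Iic.2 hxy).eventuallyLE
  positivity

/-- The integrand of the quotient of the theorem after `x = a - r`, with the Gaussian factors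
collected by completing the square. -/
lemma integrand_eq {c a b r : ℝ} (ha : a < 0) (hr : 0 < r) :
    stdNormalCDF (a - r) * ((Real.sqrt (2 * Real.pi))⁻¹ *
        Real.exp (-(c * (a - r) + b) ^ 2 / 2)) /
      (Real.sqrt (1 + c ^ 2) * Real.exp (-b ^ 2 / (2 * (1 + c ^ 2))) /
        (2 * Real.sqrt (2 * Real.pi) * |a| * (1 + c ^ 2))) =
    millsN (a - r) * (a / (a - r)) * ((2 * Real.sqrt (1 + c ^ 2) / Real.sqrt (2 * Real.pi)) *
      Real.exp (-((a * (1 + c ^ 2) + c * b) / Real.sqrt (1 + c ^ 2)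
        - Real.sqrt (1 + c ^ 2) * r) ^ 2 / 2)) := by
  have hx : a - r < 0 := by linarith
  have hs : 0 < 1 + c ^ 2 := by positivity
  have hq : 0 < Real.sqrt (1 + c ^ 2) := Real.sqrt_pos.2 hs
  have hqq : Real.sqrt (1 + c ^ 2) ^ 2 = 1 + c ^ 2 := Real.sq_sqrt hs.le
  have hp : 0 < Real.sqrt (2 * Real.pi) := Real.sqrt_pos.2 (by positivity)
  have hexp : Real.exp (-((a - r) ^ 2) / 2) * Real.exp (-(c * (a - r) + b) ^ 2 / 2) =
      Real.exp (-b ^ 2 / (2 * (1 + c ^ 2))) *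
      Real.exp (-((a * (1 + c ^ 2) + c * b) / Real.sqrt (1 + c ^ 2)
        - Real.sqrt (1 + c ^ 2) * r) ^ 2 / 2) := by
    rw [← Real.exp_add, ← Real.exp_add]
    congr 1
    have : ((a * (1 + c ^ 2) + c * b) / Real.sqrt (1 + c ^ 2) - Real.sqrt (1 + c ^ 2) * r) ^ 2
        = (a * (1 + c ^ 2) + c * b - (1 + c ^ 2) * r) ^ 2 / (1 + c ^ 2) := by
      have hq0 := hq.ne'
      generalize Real.sqrt (1 + c ^ 2) = q at *
      rw [← hqq]
      field_simp
    rw [this]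
    field_simp
    ring
  rw [cdf_eq hx, abs_of_neg ha]
  generalize Real.exp (-((a * (1 + c ^ 2) + c * b) / Real.sqrt (1 + c ^ 2)
        - Real.sqrt (1 + c ^ 2) * r) ^ 2 / 2) = E at *
  have hB := Real.exp_pos (-b ^ 2 / (2 * (1 + c ^ 2)))
  generalize Real.exp (-b ^ 2 / (2 * (1 + c ^ 2))) = B at *
  generalize Real.exp (-((a - r) ^ 2) / 2) = X at *
  generalize Real.exp (-(c * (a - r) + b) ^ 2 / 2) = Y at *
  generalize Real.sqrt (1 + c ^ 2) = q at *
  rw [← hqq]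
  have hx0 := hx.ne
  have e1 : (-(a - r))⁻¹ = -(a - r)⁻¹ := by rw [inv_neg]
  rw [e1]
  field_simp
  linear_combination (millsN (a - r) * a) * hexp

/-- Theorem 1 of the paper, case `v(u) → 0` (which forces `c·k = -(1+c²) ≠ 0`). -/
theorem integral_asymptotics_v_zero (c k : ℝ) (a b : ℝ → ℝ)
    (ha_neg : ∀ u ∈ Set.Ioo (0 : ℝ) 1, a u < 0)
    (ha : Tendsto a (𝓝[>] (0 : ℝ)) atBot)
    (hb : Tendsto (fun u => b u / a u) (𝓝[>] (0 : ℝ)) (𝓝 k))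
    (hv : Tendsto (fun u => (a u * (1 + c ^ 2) + c * b u) / Real.sqrt (1 + c ^ 2))
      (𝓝[>] (0 : ℝ)) (𝓝 0)) :
    c * k = -(1 + c ^ 2) ∧
    Tendsto (fun u =>
      (∫ x in Set.Iic (a u),
          stdNormalCDF x * ((Real.sqrt (2 * Real.pi))⁻¹ *
            Real.exp (-(c * x + b u) ^ 2 / 2))) /
      (Real.sqrt (1 + c ^ 2) * Real.exp (-(b u) ^ 2 / (2 * (1 + c ^ 2))) /
        (2 * Real.sqrt (2 * Real.pi) * |a u| * |c * k|)))
      (𝓝[>] (0 : ℝ)) (𝓝 1) := by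
  have hs : 0 < 1 + c ^ 2 := by positivity
  have hq : 0 < Real.sqrt (1 + c ^ 2) := Real.sqrt_pos.2 hs
  have hqq : Real.sqrt (1 + c ^ 2) ^ 2 = 1 + c ^ 2 := Real.sq_sqrt hs.le
  have hp : 0 < Real.sqrt (2 * Real.pi) := Real.sqrt_pos.2 (by positivity)
  have hneg : ∀ᶠ u in 𝓝[>] (0 : ℝ), a u < 0 := ha.eventually_lt_atBot 0
  have hck : c * k = -(1 + c ^ 2) := by
    have h1 : Tendsto (fun u => Real.sqrt (1 + c ^ 2) *
        ((a u * (1 + c ^ 2) + c * b u) / Real.sqrt (1 + c ^ 2) * (a u)⁻¹))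
        (𝓝[>] (0 : ℝ)) (𝓝 (Real.sqrt (1 + c ^ 2) * (0 * 0))) :=
      (hv.mul (tendsto_inv_atBot_zero.comp ha)).const_mul _
    have h2 : Tendsto (fun u => (1 + c ^ 2) + c * (b u / a u)) (𝓝[>] (0 : ℝ))
        (𝓝 ((1 + c ^ 2) + c * k)) := (hb.const_mul c).const_add _
    have h3 := tendsto_nhds_unique (h1.congr' (hneg.mono fun u hu => by
      have := hu.ne
      field_simp)) h2
    linarith
  refine ⟨hck, ?_⟩
  rw [hck, abs_neg, abs_of_pos hs]
  -- the value of the limiting Gaussian integral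
  have hlim : ∫ r in Set.Ioi (0 : ℝ), 1 * 1 *
      ((2 * Real.sqrt (1 + c ^ 2) / Real.sqrt (2 * Real.pi)) *
        Real.exp (-(0 - Real.sqrt (1 + c ^ 2) * r) ^ 2 / 2)) = 1 := by
    have h := integral_gaussian_Ioi ((1 + c ^ 2) / 2)
    have e : ∀ r : ℝ, -(0 - Real.sqrt (1 + c ^ 2) * r) ^ 2 / 2 = -((1 + c ^ 2) / 2) * r ^ 2 := by
      intro r
      rw [zero_sub, neg_sq, mul_pow, hqq]
      ring
    simp only [e, one_mul]
    rw [integral_const_mul, h]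
    have : Real.pi / ((1 + c ^ 2) / 2) = (2 * Real.pi) / (1 + c ^ 2) := by
      field_simp
    rw [this, Real.sqrt_div (by positivity)]
    field_simp
  rw [← congrArg 𝓝 hlim]
  simp only [setIntegral_Iic_eq_Ioi, ← integral_div]
  refine tendsto_integral_filter_of_dominated_convergence
    (fun r => (2 * Real.sqrt (1 + c ^ 2) / Real.sqrt (2 * Real.pi)) *
      (Real.exp (1 / 2) * Real.exp (-((1 + c ^ 2) / 4) * r ^ 2))) ?_ ?_ ?_ ?_
  · refine .of_forall fun u => Measurable.aestronglyMeasurable ?_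
    have := measurable_cdf
    fun_prop
  · have hv1 := hv.eventually (Metric.ball_mem_nhds (0 : ℝ) one_pos)
    filter_upwards [hneg, hv1] with u hu hvu
    filter_upwards [ae_restrict_mem measurableSet_Ioi] with r hr
    have hr : 0 < r := hr
    rw [integrand_eq hu hr]
    have hx : a u - r < 0 := by linarith
    have hd0 : 0 ≤ a u / (a u - r) := div_nonneg_of_nonpos hu.le hx.le
    have hd1 : a u / (a u - r) ≤ 1 := by
      rw [div_le_one_of_neg hx]
      linarith
    have hN0 := millsN_nonneg (a u - r)
    have hN1 := millsN_le_one (a u - r)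
    rw [Real.norm_of_nonneg (by positivity), ← Real.exp_add]
    have hm : millsN (a u - r) * (a u / (a u - r)) ≤ 1 := mul_le_one₀ hN1 hd0 hd1
    refine (mul_le_of_le_one_left (by positivity) hm).trans ?_
    refine mul_le_mul_of_nonneg_left (Real.exp_le_exp.2 ?_) (by positivity)
    rw [dist_zero_right, Real.norm_eq_abs] at hvu
    have hvu2 := (sq_lt_one_iff_abs_lt_one _).2 hvu
    generalize (a u * (1 + c ^ 2) + c * b u) / Real.sqrt (1 + c ^ 2) = v at *
    generalize Real.sqrt (1 + c ^ 2) = q at *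
    rw [← hqq]
    -- `(v - q r)² / 2 + v² / 2 - q² r² / 4 = (2 v - q r)² / 4` and `v² < 1`
    nlinarith [sq_nonneg (2 * v - q * r)]
  · exact ((integrable_exp_neg_mul_sq (by positivity)).const_mul _).const_mul _ |>.integrableOn
  · filter_upwards [ae_restrict_mem measurableSet_Ioi] with r hr
    have hr : 0 < r := hr
    have hx : Tendsto (fun u => a u - r) (𝓝[>] (0 : ℝ)) atBot := by
      simpa only [sub_eq_add_neg] using tendsto_atBot_add_const_right _ (-r) ha
    have hN := tendsto_millsN.comp hx
    have hd : Tendsto (fun u => a u / (a u - r)) (𝓝[>] (0 : ℝ)) (𝓝 1) := by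
      have h := ((tendsto_inv_atBot_zero.comp hx).const_mul r).const_add 1
      rw [mul_zero, add_zero] at h
      refine h.congr' (hneg.mono fun u hu => ?_)
      have : a u - r ≠ 0 := by linarith
      simp only [Function.comp]
      field_simp
      ring
    have hE := (Real.continuous_exp.tendsto _).comp
      (((hv.sub_const (Real.sqrt (1 + c ^ 2) * r)).pow 2).neg.div_const 2)
    exact ((hN.mul hd).mul (hE.const_mul _)).congr'
      (hneg.mono fun u hu => (integrand_eq hu hr).symm)
end
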